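/- The group homomorphism from B4 to G₁₂₀ sending σ1 to a1, σ2 to b, and σ3 to a2 (well defined since the braid relations of B4 hold among these elements of G₁₂₀) is injective; in particular a1, a2, b generate a subgroup of G₁₂₀ isomorphic to B4. -/

import Mathlib

/-- Braid relations of the braid group `B₄` on generators `σ1 = of 0`, `σ2 = of 1`,
`σ3 = of 2`. -/
def B4rels : Set (FreeGroup (Fin 3)) :=
  {FreeGroup.of 0 * FreeGroup.of 1 * FreeGroup.of 0 *
      (FreeGroup.of 1 * FreeGroup.of 0 * FreeGroup.of 1)⁻¹,
   FreeGroup.of 1 * FreeGroup.of 2 * FreeGroup.of 1 *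
      (FreeGroup.of 2 * FreeGroup.of 1 * FreeGroup.of 2)⁻¹,
   FreeGroup.of 0 * FreeGroup.of 2 * (FreeGroup.of 2 * FreeGroup.of 0)⁻¹}

/-- The braid group on 4 strands, as a presented group. -/
abbrev B4 : Type := PresentedGroup B4rels

namespace G120aux
/-- Generators of the Gervais presentation of `PMod(1,2,0)`:
`b = of 0`, `a1 = of 1`, `a2 = of 2`, `c12 = of 3`, `c21 = of 4`. -/
def g (i : Fin 5) : FreeGroup (Fin 5) := FreeGroup.of i
/-- The relator expressing that `x` and `y` commute. -/
def comm (x y : FreeGroup (Fin 5)) : FreeGroup (Fin 5) := x * y * (y * x)⁻¹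
/-- The relator expressing the braid relation `x y x = y x y`. -/
def braid (x y : FreeGroup (Fin 5)) : FreeGroup (Fin 5) := x * y * x * (y * x * y)⁻¹
end G120aux

open G120aux in
/-- The relations of the Gervais presentation of `PMod(1,2,0)`. -/
def G120rels : Set (FreeGroup (Fin 5)) :=
  {comm (g 1) (g 2), braid (g 1) (g 0), braid (g 2) (g 0),
   comm (g 3) (g 1), comm (g 3) (g 2), comm (g 3) (g 0),
   comm (g 4) (g 1), comm (g 4) (g 2), comm (g 4) (g 0),
   comm (g 3) (g 4),
   g 3 * g 4 * ((g 1 * g 0 * g 2) ^ 4)⁻¹}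

/-- The Gervais presentation of the pure mapping class group `PMod(1,2,0)`. -/
abbrev G120 : Type := PresentedGroup G120rels


/-- Elements satisfying the braid relations: the fourth power of `s t u` is central. -/
theorem braid_aux {G : Type*} [Group G] (s t u : G) (h1 : s * t * s = t * s * t)
    (h2 : t * u * t = u * t * u) (h3 : s * u = u * s) :
    (s * t * u) ^ 4 * s = s * (s * t * u) ^ 4 ∧ (s * t * u) ^ 4 * t = t * (s * t * u) ^ 4 ∧
    (s * t * u) ^ 4 * u = u * (s * t * u) ^ 4 := by
  have e1 : (s * t * u) * s = t * (s * t * u) := by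
    calc (s * t * u) * s = s * t * (u * s) := by group
      _ = s * t * s * u := by rw [← h3]; group
      _ = t * (s * t * u) := by rw [h1]; group
  have e2 : (s * t * u) * t = u * (s * t * u) := by
    calc (s * t * u) * t = s * (t * u * t) := by group
      _ = (s * u) * (t * u) := by rw [h2]; group
      _ = u * (s * t * u) := by rw [h3]; group
  have e3 : (s * t * u) * (s * t * u) * u = s * ((s * t * u) * (s * t * u)) := by
    calc (s * t * u) * (s * t * u) * u = s * t * (u * s) * t * u * u := by group
      _ = s * t * s * (u * t * u) * u := by rw [← h3]; group
      _ = s * (t * s * t) * u * t * u := by rw [← h2]; group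
      _ = s * s * t * (s * u) * t * u := by rw [← h1]; group
      _ = s * s * t * (u * s) * t * u := by rw [h3]
      _ = s * ((s * t * u) * (s * t * u)) := by group
  generalize s * t * u = d at e1 e2 e3
  have e4 : d * d * s = u * (d * d) := by
    rw [mul_assoc, e1, ← mul_assoc, e2, mul_assoc]
  have p : d ^ 4 = (d * d) * (d * d) := by simp only [pow_succ, pow_zero, one_mul, mul_assoc]
  have cs : d ^ 4 * s = s * d ^ 4 := by
    rw [p, mul_assoc, e4, ← mul_assoc, e3, mul_assoc]
  have cu : d ^ 4 * u = u * d ^ 4 := by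
    rw [p, mul_assoc, e3, ← mul_assoc, e4, mul_assoc]
  refine ⟨cs, ?_, cu⟩
  have ht : t = d * s * d⁻¹ := by rw [e1]; group
  have hd : Commute (d ^ 4) d := (Commute.refl d).pow_left 4
  rw [ht]
  exact ((hd.mul_right cs).mul_right hd.inv_right)

theorem B4_rels_hold :
    (PresentedGroup.of 0 * PresentedGroup.of 1 * PresentedGroup.of 0 : B4) =
      PresentedGroup.of 1 * PresentedGroup.of 0 * PresentedGroup.of 1 ∧
    (PresentedGroup.of 1 * PresentedGroup.of 2 * PresentedGroup.of 1 : B4) =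
      PresentedGroup.of 2 * PresentedGroup.of 1 * PresentedGroup.of 2 ∧
    (PresentedGroup.of 0 * PresentedGroup.of 2 : B4) =
      PresentedGroup.of 2 * PresentedGroup.of 0 := by
  refine ⟨?_, ?_, ?_⟩ <;> rw [← mul_inv_eq_one]
  · exact PresentedGroup.one_of_mem (rels := B4rels) (by unfold B4rels; exact Or.inl rfl)
  · exact PresentedGroup.one_of_mem (rels := B4rels) (by unfold B4rels; exact Or.inr (Or.inl rfl))
  · exact PresentedGroup.one_of_mem (rels := B4rels) (by unfold B4rels; exact Or.inr (Or.inr rfl))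

theorem G120_rels_hold :
    (PresentedGroup.of 1 * PresentedGroup.of 2 : G120) =
      PresentedGroup.of 2 * PresentedGroup.of 1 ∧
    (PresentedGroup.of 1 * PresentedGroup.of 0 * PresentedGroup.of 1 : G120) =
      PresentedGroup.of 0 * PresentedGroup.of 1 * PresentedGroup.of 0 ∧
    (PresentedGroup.of 2 * PresentedGroup.of 0 * PresentedGroup.of 2 : G120) =
      PresentedGroup.of 0 * PresentedGroup.of 2 * PresentedGroup.of 0 := by
  refine ⟨?_, ?_, ?_⟩ <;> rw [← mul_inv_eq_one]
  · exact PresentedGroup.one_of_mem (rels := G120rels) (by unfold G120rels; exact Or.inl rfl)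
  · exact PresentedGroup.one_of_mem (rels := G120rels)
      (by unfold G120rels; exact Or.inr (Or.inl rfl))
  · exact PresentedGroup.one_of_mem (rels := G120rels)
      (by unfold G120rels; exact Or.inr (Or.inr (Or.inl rfl)))

/-- Images of the generators of `B4` in `G120`. -/
def toG : Fin 3 → G120 := ![PresentedGroup.of 1, PresentedGroup.of 0, PresentedGroup.of 2]

/-- Images of the generators of `G120` in `B4`: a retraction. -/
def toB : Fin 5 → B4 := ![PresentedGroup.of 1, PresentedGroup.of 0, PresentedGroup.of 2,
  (PresentedGroup.of 0 * PresentedGroup.of 1 * PresentedGroup.of 2) ^ 4, 1]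

theorem toG_rels : ∀ r ∈ B4rels, FreeGroup.lift toG r = 1 := by
  obtain ⟨h1, h2, h3⟩ := G120_rels_hold
  intro r hr
  simp only [B4rels, Set.mem_insert_iff, Set.mem_singleton_iff] at hr
  rcases hr with rfl | rfl | rfl <;>
    simp only [map_mul, map_inv, FreeGroup.lift_apply_of, mul_inv_eq_one]
  · exact h2
  · exact h3.symm
  · exact h1

theorem toB_rels : ∀ r ∈ G120rels, FreeGroup.lift toB r = 1 := by
  obtain ⟨h1, h2, h3⟩ := B4_rels_hold
  obtain ⟨c1, c2, c3⟩ := braid_aux _ _ _ h1 h2 h3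
  intro r hr
  simp only [G120rels, Set.mem_insert_iff, Set.mem_singleton_iff] at hr
  rcases hr with rfl | rfl | rfl | rfl | rfl | rfl | rfl | rfl | rfl | rfl | rfl <;>
    simp only [G120aux.comm, G120aux.braid, G120aux.g, map_mul, map_inv, map_pow,
      FreeGroup.lift_apply_of, mul_inv_eq_one]
  · exact h3
  · exact h1
  · exact h2.symm
  · exact c1
  · exact c3
  · exact c2
  · exact (one_mul _).trans (mul_one _).symm
  · exact (one_mul _).trans (mul_one _).symm
  · exact (one_mul _).trans (mul_one _).symm
  · exact (mul_one _).trans (one_mul _).symm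
  · exact mul_one _

/-- Proposition 10 (first part): the homomorphism `B₄ → PMod(1,2,0)` sending `σ1, σ2, σ3`
to `a1, b, a2` is injective, i.e. `a1, a2, b` generate a copy of `B₄` in `PMod(1,2,0)`. -/
theorem stmt_11 :
    ∃ f : B4 →* G120,
      f (PresentedGroup.of 0) = PresentedGroup.of 1 ∧
      f (PresentedGroup.of 1) = PresentedGroup.of 0 ∧
      f (PresentedGroup.of 2) = PresentedGroup.of 2 ∧
      Function.Injective f := by
  refine ⟨PresentedGroup.toGroup toG_rels, PresentedGroup.toGroup.of _,
    PresentedGroup.toGroup.of _, PresentedGroup.toGroup.of _, ?_⟩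
  have key : (PresentedGroup.toGroup toB_rels).comp (PresentedGroup.toGroup toG_rels) =
      MonoidHom.id B4 := by
    apply PresentedGroup.ext
    intro i
    rw [MonoidHom.comp_apply, PresentedGroup.toGroup.of]
    fin_cases i <;> exact PresentedGroup.toGroup.of _
  exact Function.LeftInverse.injective (g := PresentedGroup.toGroup toB_rels)
    (fun x => DFunLike.congr_fun key x)
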